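/- arXiv:1812.05646 — 2 statements merged into one kernel-verified Lean document; each statement's English description precedes it below -/
import Mathlib

section
/- Let U ⊆ ℝ⁴ be open and let Γ^n_{bm} : U → ℝ (n,m,b ∈ Fin 4) be smooth connection coefficients with curvature R^n_{m ab} = ∂_a Γ^n_{bm} − ∂_b Γ^n_{am} + Σ_l (Γ^n_{al} Γ^l_{bm} − Γ^n_{bl} Γ^l_{am}). Then the Levi-Civita–contracted (dual) Bianchi identity holds: for every a, n, m ∈ Fin 4 and every point of U, Σ_{b,c,d} ε̃(a,b,c,d) ( ∂_b R^n_{m cd} + Σ_l ( Γ^n_{bl} R^l_{m cd} − R^n_{l cd} Γ^l_{bm} ) ) = 0. -/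
open scoped BigOperators

/-- The Levi-Civita symbol on `Fin 4`: the sign of the permutation sending
`(0,1,2,3)` to `(a,b,c,d)` when the four indices are distinct, and `0` otherwise. -/
noncomputable def leviCivita (a b c d : Fin 4) : ℝ :=
  ∑ σ : Equiv.Perm (Fin 4),
    if σ 0 = a ∧ σ 1 = b ∧ σ 2 = c ∧ σ 3 = d then ((Equiv.Perm.sign σ : ℤ) : ℝ) else 0

/-- Partial derivative of `f : (Fin 4 → ℝ) → ℝ` in the `a`-th coordinate direction. -/
noncomputable def pd (a : Fin 4) (f : (Fin 4 → ℝ) → ℝ) (x : Fin 4 → ℝ) : ℝ :=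
  fderiv ℝ f x (Pi.single a 1)

/-- The curvature `R^n_{m ab}` of the connection coefficients `Γ^n_{bm}`. -/
noncomputable def curv (Γ : Fin 4 → Fin 4 → Fin 4 → (Fin 4 → ℝ) → ℝ)
    (n m a b : Fin 4) (x : Fin 4 → ℝ) : ℝ :=
  pd a (Γ n b m) x - pd b (Γ n a m) x
    + ∑ l : Fin 4, (Γ n a l x * Γ l b m x - Γ n b l x * Γ l a m x)

lemma lc_cyc (a b c d : Fin 4) : leviCivita a b c d = leviCivita a c d b := by
  unfold leviCivita
  let τ : Equiv.Perm (Fin 4) := Equiv.swap 1 2 * Equiv.swap 2 3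
  have h0 : τ 0 = 0 := by decide
  have h1 : τ 1 = 2 := by decide
  have h2 : τ 2 = 3 := by decide
  have h3 : τ 3 = 1 := by decide
  have hs : Equiv.Perm.sign τ = 1 := by decide
  rw [← Equiv.sum_comp (Equiv.mulRight τ) (fun σ : Equiv.Perm (Fin 4) =>
    if σ 0 = a ∧ σ 1 = c ∧ σ 2 = d ∧ σ 3 = b then ((Equiv.Perm.sign σ : ℤ) : ℝ) else 0)]
  refine Finset.sum_congr rfl fun σ _ => ?_
  simp only [Equiv.coe_mulRight, Equiv.Perm.mul_apply, h0, h1, h2, h3, Equiv.Perm.sign_mul, hs,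
    mul_one]
  congr 1
  apply propext
  tauto

lemma pd_diff {f : (Fin 4 → ℝ) → ℝ} {x : Fin 4 → ℝ} (hf : ContDiffAt ℝ 2 f x) (a : Fin 4) :
    DifferentiableAt ℝ (pd a f) x := by
  have h : DifferentiableAt ℝ (fderiv ℝ f) x :=
    (hf.fderiv_right (m := 1) (by norm_num)).differentiableAt (by norm_num)
  unfold pd
  fun_prop

lemma pd_pd {f : (Fin 4 → ℝ) → ℝ} {x : Fin 4 → ℝ} (hf : ContDiffAt ℝ 2 f x) (a b : Fin 4) :
    pd a (pd b f) x = pd b (pd a f) x := by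
  have h : DifferentiableAt ℝ (fderiv ℝ f) x :=
    (hf.fderiv_right (m := 1) (by norm_num)).differentiableAt (by norm_num)
  have key : ∀ u v : Fin 4 → ℝ, fderiv ℝ (fun y => fderiv ℝ f y u) x v
      = fderiv ℝ (fderiv ℝ f) x v u := by
    intro u v
    rw [fderiv_clm_apply h (differentiableAt_const _)]
    simp
  have hs := hf.isSymmSndFDerivAt (by simp)
  change fderiv ℝ (fun y => fderiv ℝ f y _) x _ = fderiv ℝ (fun y => fderiv ℝ f y _) x _
  rw [key, key]
  exact hs _ _

lemma pd_curv (Γ : Fin 4 → Fin 4 → Fin 4 → (Fin 4 → ℝ) → ℝ) (x : Fin 4 → ℝ)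
    (h : ∀ n b m : Fin 4, ContDiffAt ℝ 2 (Γ n b m) x) (n m b c d : Fin 4) :
    pd b (curv Γ n m c d) x = pd b (pd c (Γ n d m)) x - pd b (pd d (Γ n c m)) x
      + ∑ l : Fin 4, (pd b (Γ n c l) x * Γ l d m x + Γ n c l x * pd b (Γ l d m) x
        - (pd b (Γ n d l) x * Γ l c m x + Γ n d l x * pd b (Γ l c m) x)) := by
  have hd : ∀ n b m : Fin 4, HasFDerivAt (Γ n b m) (fderiv ℝ (Γ n b m) x) x := fun n b m =>
    ((h n b m).differentiableAt (by norm_num)).hasFDerivAt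
  have hp : ∀ a n b m : Fin 4, HasFDerivAt (pd a (Γ n b m)) (fderiv ℝ (pd a (Γ n b m)) x) x :=
    fun a n b m => (pd_diff (h n b m) a).hasFDerivAt
  have H : HasFDerivAt (curv Γ n m c d) _ x :=
    ((hp c n d m).sub (hp d n c m)).add
      (HasFDerivAt.fun_sum (u := Finset.univ) fun l _ =>
        ((hd n c l).mul (hd l d m)).sub ((hd n d l).mul (hd l c m)))
  conv_lhs => unfold pd
  rw [H.fderiv]
  simp only [ContinuousLinearMap.add_apply, ContinuousLinearMap.sub_apply,
    ContinuousLinearMap.sum_apply, ContinuousLinearMap.smul_apply, smul_eq_mul]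
  unfold pd
  congr 1
  refine Finset.sum_congr rfl fun l _ => ?_
  ring

lemma cyc (Γ : Fin 4 → Fin 4 → Fin 4 → (Fin 4 → ℝ) → ℝ) (x : Fin 4 → ℝ)
    (h : ∀ n b m : Fin 4, ContDiffAt ℝ 2 (Γ n b m) x) (n m : Fin 4)
    (B : Fin 4 → Fin 4 → Fin 4 → ℝ)
    (hB : ∀ b c d, B b c d = pd b (curv Γ n m c d) x
      + ∑ l : Fin 4, (Γ n b l x * curv Γ l m c d x - curv Γ n l c d x * Γ l b m x))
    (b c d : Fin 4) :
    B b c d + B c d b + B d b c = 0 := by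
  simp only [hB, pd_curv Γ x h]
  rw [pd_pd (h n d m) b c, pd_pd (h n c m) b d, pd_pd (h n b m) c d]
  simp only [curv, Fin.sum_univ_four]
  ring

/-- The Levi-Civita–contracted (dual) differential Bianchi identity:
`ε̃(a,b,c,d) ( ∂_b R^n_{m cd} + Γ^n_{bl} R^l_{m cd} − R^n_{l cd} Γ^l_{bm} ) = 0`. -/
theorem dual_bianchi_identity
    (U : Set (Fin 4 → ℝ)) (hU : IsOpen U)
    (Γ : Fin 4 → Fin 4 → Fin 4 → (Fin 4 → ℝ) → ℝ)
    (hΓ : ∀ n b m : Fin 4, ContDiffOn ℝ (⊤ : ℕ∞) (Γ n b m) U) :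
    ∀ x ∈ U, ∀ a n m : Fin 4,
      ∑ b : Fin 4, ∑ c : Fin 4, ∑ d : Fin 4,
        leviCivita a b c d *
          (pd b (curv Γ n m c d) x
            + ∑ l : Fin 4, (Γ n b l x * curv Γ l m c d x - curv Γ n l c d x * Γ l b m x)) = 0 := by
  intro x hx a n m
  have h : ∀ n b m : Fin 4, ContDiffAt ℝ 2 (Γ n b m) x := fun n b m =>
    ((hΓ n b m).contDiffAt (hU.mem_nhds hx)).of_le (by exact (WithTop.coe_le_coe.2 le_top : ((2 : ℕ∞) : WithTop ℕ∞) ≤ ((⊤ : ℕ∞) : WithTop ℕ∞)))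
  obtain ⟨B, hB⟩ : ∃ B : Fin 4 → Fin 4 → Fin 4 → ℝ, ∀ b c d, B b c d = pd b (curv Γ n m c d) x
      + ∑ l : Fin 4, (Γ n b l x * curv Γ l m c d x - curv Γ n l c d x * Γ l b m x) :=
    ⟨_, fun _ _ _ => rfl⟩
  have hc := cyc Γ x h n m B hB
  simp only [← hB]
  have e1 : ∑ b, ∑ c, ∑ d, leviCivita a b c d * B b c d
      = ∑ b, ∑ c, ∑ d, leviCivita a b c d * B d b c := by
    rw [Finset.sum_comm]
    refine Finset.sum_congr rfl fun c _ => ?_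
    rw [Finset.sum_comm]
    refine Finset.sum_congr rfl fun d _ => Finset.sum_congr rfl fun b _ => ?_
    rw [lc_cyc]
  have e2 : ∑ b, ∑ c, ∑ d, leviCivita a b c d * B d b c
      = ∑ b, ∑ c, ∑ d, leviCivita a b c d * B c d b := by
    rw [Finset.sum_comm]
    refine Finset.sum_congr rfl fun c _ => ?_
    rw [Finset.sum_comm]
    refine Finset.sum_congr rfl fun d _ => Finset.sum_congr rfl fun b _ => ?_
    rw [lc_cyc]
  have e3 : ∑ b, ∑ c, ∑ d, leviCivita a b c d * B b c d
      + ∑ b, ∑ c, ∑ d, leviCivita a b c d * B c d b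
      + ∑ b, ∑ c, ∑ d, leviCivita a b c d * B d b c = 0 := by
    simp only [← Finset.sum_add_distrib, ← mul_add, hc, mul_zero, Finset.sum_const_zero]
  linarith
end

section
/- Let f : EuclideanSpace ℝ (Fin 3) → ℝ be smooth on the complement of the origin and homogeneous of degree zero (f(t • x) = f(x) for all t > 0, x ≠ 0), and set u(x) = f(x)/‖x‖ for x ≠ 0. If ‖x‖³ · (Δu)(x) → 0 as ‖x‖ → ∞, then f is constant on the complement of the origin. -/
open scoped BigOperators

/-- The Euclidean Laplacian on `ℝ³`: the sum of the second partial derivatives in the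
directions of the standard orthonormal basis. -/
noncomputable def lap (g : EuclideanSpace ℝ (Fin 3) → ℝ) (x : EuclideanSpace ℝ (Fin 3)) : ℝ :=
  ∑ i : Fin 3,
    fderiv ℝ (fun y => fderiv ℝ g y (EuclideanSpace.single i 1)) x (EuclideanSpace.single i 1)

abbrev E3 := EuclideanSpace ℝ (Fin 3)

lemma aux_fd_smul (g : E3 → ℝ) (c : ℝ) (hc : c ≠ 0) (x : E3) :
    fderiv ℝ (fun y => c * g y) x = c • fderiv ℝ g x := by
  have := invertibleOfNonzero hc
  have := fderiv_const_smul_of_invertible (𝕜 := ℝ) (f := g) (x := x) (R := ℝ) c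
  simpa [Pi.smul_def] using this

lemma aux_lap_scale (u : E3 → ℝ) (t : ℝ) (ht : 0 < t)
    (hu : ∀ y, u (t • y) = t⁻¹ * u y) (x : E3) :
    t ^ 3 * lap u (t • x) = lap u x := by
  have h1 : ∀ y v, fderiv ℝ u (t • y) v = t⁻¹ ^ 2 * fderiv ℝ u y v := by
    intro y v
    have a := fderiv_comp_smul (𝕜 := ℝ) (f := u) (x := y) t
    have b : (fun y => u (t • y)) = fun y => t⁻¹ * u y := funext hu
    rw [b, aux_fd_smul _ _ (by positivity)] at a
    have := congrArg (fun L => L v) a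
    simp only [smul_apply, smul_eq_mul] at this
    field_simp at this ⊢
    linarith
  have h2 : ∀ y v, fderiv ℝ (fun z => fderiv ℝ u z v) (t • y) v
      = t⁻¹ ^ 3 * fderiv ℝ (fun z => fderiv ℝ u z v) y v := by
    intro y v
    have a := fderiv_comp_smul (𝕜 := ℝ) (f := fun z => fderiv ℝ u z v) (x := y) t
    have b : (fun y => fderiv ℝ u (t • y) v) = fun y => t⁻¹ ^ 2 * fderiv ℝ u y v :=
      funext (fun y => h1 y v)
    rw [b, aux_fd_smul _ _ (by positivity)] at a
    have := congrArg (fun L => L v) a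
    simp only [smul_apply, smul_eq_mul] at this
    field_simp at this ⊢
    linarith
  unfold lap
  rw [Finset.mul_sum]
  refine Finset.sum_congr rfl fun i _ => ?_
  rw [h2]
  field_simp

lemma aux_lap_zero (f : E3 → ℝ)
    (hhom : ∀ t : ℝ, 0 < t → ∀ x : E3, x ≠ 0 → f (t • x) = f x)
    (hdecay : Filter.Tendsto
      (fun x : E3 => ‖x‖ ^ 3 * lap (fun y => f y / ‖y‖) x)
      (Filter.comap (fun x : E3 => ‖x‖) Filter.atTop) (nhds 0)) (x : E3) (hx : x ≠ 0) :
    lap (fun y => f y / ‖y‖) x = 0 := by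
  have hn : 0 < ‖x‖ := norm_pos_iff.2 hx
  have h1 : Filter.Tendsto (fun t : ℝ => t • x) Filter.atTop
      (Filter.comap (fun x : E3 => ‖x‖) Filter.atTop) := by
    rw [Filter.tendsto_comap_iff]
    have : Filter.Tendsto (fun t : ℝ => t * ‖x‖) Filter.atTop Filter.atTop :=
      Filter.tendsto_id.atTop_mul_const hn
    refine this.congr' ?_
    filter_upwards [Filter.eventually_gt_atTop 0] with t ht
    simp [norm_smul, abs_of_pos ht]
  have h2 := hdecay.comp h1
  have h3 : Filter.Tendsto (fun _ : ℝ => ‖x‖ ^ 3 * lap (fun y => f y / ‖y‖) x)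
      Filter.atTop (nhds 0) := by
    refine h2.congr' ?_
    filter_upwards [Filter.eventually_gt_atTop 0] with t ht
    have := aux_lap_scale (fun y => f y / ‖y‖) t ht (by
      intro y
      by_cases hy : y = 0
      · simp [hy]
      · simp only [hhom t ht y hy, norm_smul, Real.norm_eq_abs, abs_of_pos ht]
        field_simp) x
    simp only [Function.comp, norm_smul, Real.norm_eq_abs, abs_of_pos ht]
    rw [← this]; ring
  have h4 := tendsto_nhds_unique h3 tendsto_const_nhds
  have : ‖x‖ ^ 3 ≠ 0 := by positivity
  rcases mul_eq_zero.1 h4.symm with h | h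
  · exact absurd h this
  · exact h

lemma aux_norm_inv (x : E3) (hx : x ≠ 0) :
    HasFDerivAt (fun y : E3 => ‖y‖⁻¹) (-(‖x‖⁻¹ ^ 3) • innerSL ℝ x) x := by
  have hn : 0 < ‖x‖ := norm_pos_iff.2 hx
  have h1 : HasFDerivAt (fun y : E3 => ‖y‖ ^ 2) (2 • innerSL ℝ x) x :=
    (hasStrictFDerivAt_norm_sq x).hasFDerivAt
  have h2 := h1.sqrt (by positivity)
  have h3 : (fun y : E3 => √(‖y‖ ^ 2)) = fun y => ‖y‖ := by
    funext y; exact Real.sqrt_sq (norm_nonneg y)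
  rw [h3] at h2
  have h4 := (hasDerivAt_inv hn.ne').comp_hasFDerivAt x h2
  refine h4.congr_fderiv ?_
  ext v
  simp [Real.sqrt_sq hn.le]
  field_simp

lemma aux_inner_single (x : E3) (i : Fin 3) :
    innerSL ℝ x (EuclideanSpace.single i 1) = x i := by
  simp [EuclideanSpace.inner_single_right]

lemma aux_cda (f : E3 → ℝ)
    (hf : ContDiffOn ℝ (⊤ : ℕ∞) f {(0 : E3)}ᶜ) (x : E3) (hx : x ≠ 0) :
    ContDiffAt ℝ (⊤ : ℕ∞) f x :=
  hf.contDiffAt (isOpen_compl_singleton.mem_nhds hx)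

lemma aux_cda' (f : E3 → ℝ)
    (hf : ContDiffOn ℝ (⊤ : ℕ∞) f {(0 : E3)}ᶜ) (v : E3) (x : E3) (hx : x ≠ 0) :
    ContDiffAt ℝ 1 (fun y => fderiv ℝ f y v) x := by
  have h : ContDiffAt ℝ 1 (fderiv ℝ f) x :=
    (aux_cda f hf x hx).fderiv_right (m := 1) (by
      rw [one_add_one_eq_two]; exact WithTop.coe_le_coe.2 (le_top : (2 : ℕ∞) ≤ ⊤))
  exact h.clm_apply contDiffAt_const

lemma aux_euler (f : E3 → ℝ)
    (hf : ContDiffOn ℝ (⊤ : ℕ∞) f {(0 : E3)}ᶜ)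
    (hhom : ∀ t : ℝ, 0 < t → ∀ x : E3, x ≠ 0 → f (t • x) = f x) (x : E3) (hx : x ≠ 0) :
    ∑ i, x i * fderiv ℝ f x (EuclideanSpace.single i 1) = 0 := by
  have hd : DifferentiableAt ℝ f x := (aux_cda f hf x hx).differentiableAt (by simp)
  have h1 : HasDerivAt (fun t : ℝ => t • x) x 1 := by
    simpa using (hasDerivAt_id (1:ℝ)).smul_const x
  have h2 : HasDerivAt (fun t : ℝ => f (t • x)) (fderiv ℝ f x x) 1 := by
    have hd' : HasFDerivAt f (fderiv ℝ f x) ((1:ℝ) • x) := by simpa using hd.hasFDerivAt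
    exact hd'.comp_hasDerivAt 1 h1
  have h3 : HasDerivAt (fun t : ℝ => f (t • x)) 0 1 := by
    refine (hasDerivAt_const (1:ℝ) (f x)).congr_of_eventuallyEq ?_
    filter_upwards [lt_mem_nhds (zero_lt_one (α := ℝ))] with t ht
    exact hhom t ht x hx
  have h4 := h2.unique h3
  have h5 : x = ∑ i, x i • (EuclideanSpace.single i 1 : E3) := by
    ext j; fin_cases j <;> simp [Fin.sum_univ_three]
  rw [← h4]
  conv_rhs => rw [show fderiv ℝ f x x = fderiv ℝ f x (∑ i, x i • (EuclideanSpace.single i 1 : E3)) from by rw [← h5]]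
  simp

lemma aux_lap_f (f : E3 → ℝ)
    (hf : ContDiffOn ℝ (⊤ : ℕ∞) f {(0 : E3)}ᶜ)
    (hhom : ∀ t : ℝ, 0 < t → ∀ x : E3, x ≠ 0 → f (t • x) = f x) (x : E3) (hx : x ≠ 0)
    (hl : lap (fun y => f y / ‖y‖) x = 0) : lap f x = 0 := by
  have hn : 0 < ‖x‖ := norm_pos_iff.2 hx
  have hD : ∀ y : E3, y ≠ 0 → HasFDerivAt f (fderiv ℝ f y) y := fun y hy =>
    ((aux_cda f hf y hy).differentiableAt (by simp)).hasFDerivAt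
  have h1 : ∀ y : E3, y ≠ 0 → ∀ i : Fin 3,
      fderiv ℝ (fun y => f y / ‖y‖) y (EuclideanSpace.single i 1) =
      fderiv ℝ f y (EuclideanSpace.single i 1) * ‖y‖⁻¹ - f y * (y i * ‖y‖⁻¹ ^ 3) := by
    intro y hy i
    have := (hD y hy).mul (aux_norm_inv y hy)
    simp only [div_eq_mul_inv]
    rw [show fderiv ℝ (fun y => f y * ‖y‖⁻¹) y = _ from HasFDerivAt.fderiv this]
    simp only [add_apply, smul_apply, smul_eq_mul, aux_inner_single]
    ring
  have h2 : ∀ i : Fin 3,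
      fderiv ℝ (fun y => fderiv ℝ (fun y => f y / ‖y‖) y (EuclideanSpace.single i 1)) x
        (EuclideanSpace.single i 1) =
      fderiv ℝ (fun y => fderiv ℝ f y (EuclideanSpace.single i 1)) x
        (EuclideanSpace.single i 1) * ‖x‖⁻¹
      - 2 * (x i * fderiv ℝ f x (EuclideanSpace.single i 1)) * ‖x‖⁻¹ ^ 3
      - f x * ‖x‖⁻¹ ^ 3 + 3 * f x * (x i) ^ 2 * ‖x‖⁻¹ ^ 5 := by
    intro i
    have he : (fun y => fderiv ℝ (fun y => f y / ‖y‖) y (EuclideanSpace.single i 1)) =ᶠ[nhds x]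
        fun y => fderiv ℝ f y (EuclideanSpace.single i 1) * ‖y‖⁻¹
          - f y * (y i * ‖y‖⁻¹ ^ 3) := by
      filter_upwards [isOpen_compl_singleton.mem_nhds hx] with y hy
      exact h1 y hy i
    rw [he.fderiv_eq]
    have hDi := ((aux_cda' f hf (EuclideanSpace.single i 1) x hx).differentiableAt
      (by simp)).hasFDerivAt
    have hc : HasFDerivAt (fun y : E3 => y i) (EuclideanSpace.proj i : E3 →L[ℝ] ℝ) x :=
      (EuclideanSpace.proj i : E3 →L[ℝ] ℝ).hasFDerivAt
    have hN := aux_norm_inv x hx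
    have hall := (hDi.mul hN).sub ((hD x hx).mul (hc.mul (hN.pow 3)))
    rw [show fderiv ℝ (fun y => fderiv ℝ f y (EuclideanSpace.single i 1) * ‖y‖⁻¹
          - f y * (y i * ‖y‖⁻¹ ^ 3)) x = _ from HasFDerivAt.fderiv hall]
    simp only [add_apply, sub_apply, smul_apply, smul_eq_mul, aux_inner_single]
    simp
    ring
  have he := aux_euler f hf hhom x hx
  have hs : ‖x‖ ^ 2 = x 0 ^ 2 + x 1 ^ 2 + x 2 ^ 2 := by
    rw [EuclideanSpace.norm_sq_eq]; simp [Fin.sum_univ_three]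
  unfold lap at hl ⊢
  simp only [h2] at hl
  simp only [Fin.sum_univ_three] at hl he ⊢
  have hm : ‖x‖ * ‖x‖⁻¹ = 1 := mul_inv_cancel₀ hn.ne'
  generalize ‖x‖⁻¹ = n at *
  generalize ‖x‖ = m at *
  have key : (fderiv ℝ (fun y => fderiv ℝ f y (EuclideanSpace.single 0 1)) x (EuclideanSpace.single 0 1) +
      fderiv ℝ (fun y => fderiv ℝ f y (EuclideanSpace.single 1 1)) x (EuclideanSpace.single 1 1) +
      fderiv ℝ (fun y => fderiv ℝ f y (EuclideanSpace.single 2 1)) x (EuclideanSpace.single 2 1)) * n = 0 := by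
    have e5 : m ^ 2 * n ^ 5 = n ^ 3 := by
      calc m ^ 2 * n ^ 5 = (m * n) ^ 2 * n ^ 3 := by ring
        _ = n ^ 3 := by rw [hm]; ring
    linear_combination hl + 2 * n ^ 3 * he + 3 * f x * n ^ 5 * hs - 3 * f x * e5
  rcases mul_eq_zero.1 key with h | h
  · exact h
  · rw [h] at hm; simp at hm

lemma aux_int_zero (G : E3 → ℝ) (hG : ContDiff ℝ 1 G) (hs : HasCompactSupport G) (v : E3) :
    MeasureTheory.Integrable (fun x => fderiv ℝ G x v) ∧ ∫ x, fderiv ℝ G x v = 0 := by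
  have hc : Continuous (fun x => fderiv ℝ G x v) :=
    (hG.continuous_fderiv (by simp)).clm_apply continuous_const
  have hi : MeasureTheory.Integrable (fun x => fderiv ℝ G x v) :=
    hc.integrable_of_hasCompactSupport (hs.fderiv_apply ℝ v)
  refine ⟨hi, ?_⟩
  have := integral_mul_fderiv_eq_neg_fderiv_mul_of_integrable
    (μ := MeasureTheory.volume) (f := G) (g := fun _ => (1:ℝ)) (v := v) (𝕜 := ℝ)
    (by simpa using hi) (by simp)
    (by simpa using hG.continuous.integrable_of_hasCompactSupport hs)
    (fun x _ => (hG.differentiable (by simp)) x) (fun x _ => by simp)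
  simpa using this

lemma aux_grad_zero (f : E3 → ℝ)
    (hf : ContDiffOn ℝ (⊤ : ℕ∞) f {(0 : E3)}ᶜ)
    (hhom : ∀ t : ℝ, 0 < t → ∀ x : E3, x ≠ 0 → f (t • x) = f x)
    (hl : ∀ x : E3, x ≠ 0 → lap f x = 0) (p : E3) (hp : p ≠ 0) :
    ∀ i : Fin 3, fderiv ℝ f p (EuclideanSpace.single i 1) = 0 := by
  have hn : 0 < ‖p‖ := norm_pos_iff.2 hp
  have hn2 : 0 < ‖p‖ ^ 2 := by positivity
  let φ : ContDiffBump (‖p‖ ^ 2 : ℝ) :=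
    ⟨‖p‖ ^ 2 / 4, ‖p‖ ^ 2 / 2, by positivity, by linarith⟩
  let η : E3 → ℝ := fun x => φ (‖x‖ ^ 2)
  have hη : ContDiff ℝ 1 η := φ.contDiff.comp (contDiff_norm_sq ℝ)
  have hηp : η p = 1 := φ.one_of_mem_closedBall (by simp [φ]; positivity)
  have hη0 : ∀ x : E3, 0 ≤ η x := fun x => φ.nonneg
  have hηnear : ∀ᶠ x in nhds (0 : E3), η x = 0 := by
    have hlt : ∀ᶠ x in nhds (0 : E3), ‖x‖ ^ 2 < ‖p‖ ^ 2 / 2 := by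
      have hc : Continuous fun x : E3 => ‖x‖ ^ 2 := by fun_prop
      exact (hc.continuousAt (x := 0)).eventually_lt continuousAt_const (by simpa using by positivity)
    filter_upwards [hlt] with x hx
    refine φ.zero_of_le_dist ?_
    rw [Real.dist_eq, abs_sub_comm, abs_of_nonneg (by linarith)]
    simp only [φ]; linarith
  have hηcs : HasCompactSupport η := by
    refine HasCompactSupport.intro (isCompact_closedBall (0 : E3) (2 * ‖p‖)) fun x hx => ?_
    have hx' : 2 * ‖p‖ < ‖x‖ := by simpa using hx
    refine φ.zero_of_le_dist ?_
    rw [Real.dist_eq]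
    refine le_trans ?_ (le_abs_self _)
    simp only [φ]; nlinarith
  have hηd : ∀ x : E3, x ≠ 0 → ∃ c : ℝ, ∀ v, fderiv ℝ η x v = c * innerSL ℝ x v := by
    intro x _
    have h1 : HasFDerivAt (fun y : E3 => ‖y‖ ^ 2) (2 • innerSL ℝ x) x :=
      (hasStrictFDerivAt_norm_sq x).hasFDerivAt
    have h2 : HasDerivAt φ (deriv φ (‖x‖ ^ 2)) (‖x‖ ^ 2) :=
      ((φ.contDiff (n := 1)).differentiable (by simp) _).hasDerivAt
    have h3 := h2.comp_hasFDerivAt x h1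
    refine ⟨2 * deriv φ (‖x‖ ^ 2), fun v => ?_⟩
    rw [show fderiv ℝ η x = _ from h3.fderiv]
    simp; ring
  let D : Fin 3 → E3 → ℝ := fun i x => fderiv ℝ f x (EuclideanSpace.single i 1)
  let G : Fin 3 → E3 → ℝ := fun i x => η x * (f x * D i x)
  have hG : ∀ i, ContDiff ℝ 1 (G i) := by
    intro i
    rw [contDiff_iff_contDiffAt]
    intro x
    by_cases hx : x = 0
    · subst hx
      refine (contDiffAt_const (c := (0:ℝ))).congr_of_eventuallyEq ?_
      filter_upwards [hηnear] with y hy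
      simp [G, hy]
    · exact hη.contDiffAt.mul (((aux_cda f hf x hx).of_le (by exact_mod_cast le_top)).mul
        (aux_cda' f hf _ x hx))
  have hGs : ∀ i, HasCompactSupport (G i) := fun i => hηcs.mul_right
  have hdiv : ∀ x, ∑ i, fderiv ℝ (G i) x (EuclideanSpace.single i 1)
      = η x * ∑ i, D i x ^ 2 := by
    intro x
    by_cases hx : x = 0
    · subst hx
      have h0 : η 0 = 0 := hηnear.self_of_nhds
      have : ∀ i, fderiv ℝ (G i) 0 = 0 := by
        intro i
        have : G i =ᶠ[nhds 0] fun _ => (0:ℝ) := by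
          filter_upwards [hηnear] with y hy
          simp [G, hy]
        rw [this.fderiv_eq]; simp
      simp [this, h0]
    · obtain ⟨c, hc⟩ := hηd x hx
      have h1 : ∀ i, fderiv ℝ (G i) x (EuclideanSpace.single i 1) =
          η x * (D i x ^ 2 + f x * fderiv ℝ (D i) x (EuclideanSpace.single i 1))
          + c * x i * (f x * D i x) := by
        intro i
        have ha := (hη.differentiable (by simp) x).hasFDerivAt
        have hb := ((aux_cda f hf x hx).differentiableAt (by simp)).hasFDerivAt
        have hd : HasFDerivAt (D i) _ x :=
          ((aux_cda' f hf (EuclideanSpace.single i 1) x hx).differentiableAt (by simp)).hasFDerivAt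
        rw [show fderiv ℝ (G i) x = _ from (ha.mul (hb.mul hd)).fderiv]
        simp only [add_apply, smul_apply, smul_eq_mul, hc, aux_inner_single]
        simp only [Pi.mul_apply, D]
        ring
      have he := aux_euler f hf hhom x hx
      have hl' := hl x hx
      unfold lap at hl'
      change ∑ i, fderiv ℝ (D i) x (EuclideanSpace.single i 1) = 0 at hl'
      change ∑ i, x i * D i x = 0 at he
      simp only [h1]
      simp only [Fin.sum_univ_three] at he hl' ⊢
      linear_combination η x * f x * hl' + c * f x * he
  have hint : ∫ x, η x * ∑ i, D i x ^ 2 = 0 := by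
    simp only [← hdiv]
    rw [MeasureTheory.integral_finsetSum _ (fun i _ => (aux_int_zero _ (hG i) (hGs i) _).1)]
    exact Finset.sum_eq_zero fun i _ => (aux_int_zero _ (hG i) (hGs i) _).2
  have hcont : Continuous (fun x => η x * ∑ i, D i x ^ 2) := by
    simp only [← hdiv]
    exact continuous_finsetSum _ fun i _ =>
      ((hG i).continuous_fderiv (by simp)).clm_apply continuous_const
  have hnn : 0 ≤ (fun x => η x * ∑ i, D i x ^ 2) := fun x =>
    mul_nonneg (hη0 x) (Finset.sum_nonneg fun i _ => sq_nonneg _)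
  have hi : MeasureTheory.Integrable (fun x => η x * ∑ i, D i x ^ 2) :=
    hcont.integrable_of_hasCompactSupport hηcs.mul_right
  have hae := (MeasureTheory.integral_eq_zero_iff_of_nonneg hnn hi).1 hint
  have hall := (hcont.ae_eq_iff_eq MeasureTheory.volume continuous_const).1 hae
  have hpz : η p * ∑ i, D i p ^ 2 = 0 := congrFun hall p
  rw [hηp, one_mul, Finset.sum_eq_zero_iff_of_nonneg (fun i _ => sq_nonneg _)] at hpz
  intro i
  exact pow_eq_zero_iff (two_ne_zero) |>.1 (hpz i (Finset.mem_univ i))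

/-- If `f` is smooth away from the origin, homogeneous of degree zero, and
`u(x) = f(x)/‖x‖` satisfies `‖x‖³ Δu(x) → 0` as `‖x‖ → ∞`, then `f` is constant on the
complement of the origin. -/
theorem angular_part_of_decaying_field_is_constant
    (f : EuclideanSpace ℝ (Fin 3) → ℝ)
    (hf : ContDiffOn ℝ (⊤ : ℕ∞) f {(0 : EuclideanSpace ℝ (Fin 3))}ᶜ)
    (hhom : ∀ t : ℝ, 0 < t → ∀ x : EuclideanSpace ℝ (Fin 3), x ≠ 0 → f (t • x) = f x)
    (hdecay : Filter.Tendsto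
      (fun x : EuclideanSpace ℝ (Fin 3) => ‖x‖ ^ 3 * lap (fun y => f y / ‖y‖) x)
      (Filter.comap (fun x : EuclideanSpace ℝ (Fin 3) => ‖x‖) Filter.atTop) (nhds 0)) :
    ∀ x y : EuclideanSpace ℝ (Fin 3), x ≠ 0 → y ≠ 0 → f x = f y := by
  intro x y hx hy
  refine isOpen_compl_singleton.is_const_of_fderiv_eq_zero (𝕜 := ℝ) (s := {(0 : EuclideanSpace ℝ (Fin 3))}ᶜ)
    (isConnected_compl_singleton_of_one_lt_rank ?_ 0).isPreconnected
    (hf.differentiableOn (by simp)) ?_ hx hy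
  · rw [← Module.finrank_eq_rank]
    simp
  · intro z hz
    have h := aux_grad_zero f hf hhom (fun w hw => aux_lap_f f hf hhom w hw
      (aux_lap_zero f hhom hdecay w hw)) z hz
    have h5 : ∀ v : E3, v = ∑ i, v i • (EuclideanSpace.single i 1 : E3) := by
      intro v
      ext j; fin_cases j <;> simp [Fin.sum_univ_three]
    ext v
    rw [h5 v]
    simp [h]
end
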